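/- The inclusion of F_{√(1+x²)} into the real elements of F_{√x} is strict: there exists a real number (for example √(1+√2)) which belongs to F_{√x} but does not belong to F_{√(1+x²)}. -/

import Mathlib

/-!
The witness is `√(1+√2)`. The real numbers which are algebraic over `ℚ` and all of whose conjugates
are real form a subfield of `ℝ` (`totallyRealSubfield`). It is closed under `x ↦ √(1+x²)`, because
any conjugate of `√(1+x²)` squares to `1+t²` for a real conjugate `t` of `x`, and this is
nonnegative. On the other hand an embedding sending `√2` to `-√2` (`exists_embedding_neg_sqrt_two`)
sends `√(1+√2)` to a square root of `1-√2 < 0`, which is not real.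
-/

open Polynomial

/-- A complex number is *totally real* if it is algebraic over ℚ and every complex
root of its minimal polynomial over ℚ is a real number. -/
def IsTotallyReal (α : ℂ) : Prop :=
  IsAlgebraic ℚ α ∧ ∀ z : ℂ, aeval z (minpoly ℚ α) = 0 → z.im = 0

/-- Membership in `F_{√(1+x²)}`, the smallest subfield of ℝ closed under
`x ↦ √(1+x²)`. -/
def MemFSqrtOneAddSq (α : ℝ) : Prop :=
  ∀ K : Subfield ℝ, (∀ x ∈ K, Real.sqrt (1 + x ^ 2) ∈ K) → α ∈ K

/-- Membership in `F_{√x}`, the smallest subfield of ℂ closed under taking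
square roots. -/
def MemFSqrt (α : ℂ) : Prop :=
  ∀ L : Subfield ℂ, (∀ z : ℂ, z ^ 2 ∈ L → z ∈ L) → α ∈ L

/-- The field of real numbers that are algebraic over `ℚ` and are sent into `ℝ` by every embedding
of the field of algebraic numbers into `ℂ`. -/
noncomputable def totallyRealSubfield : Subfield ℝ :=
  Subfield.comap Complex.ofRealHom
    (Subfield.map (algebraMap (algebraicClosure ℚ ℂ) ℂ)
      (⨅ σ : algebraicClosure ℚ ℂ →ₐ[ℚ] ℂ,
        Subfield.comap (σ : algebraicClosure ℚ ℂ →+* ℂ) Complex.ofRealHom.fieldRange))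

lemma mem_totallyRealSubfield {x : ℝ} :
    x ∈ totallyRealSubfield ↔ ∃ a : algebraicClosure ℚ ℂ, (a : ℂ) = x ∧
      ∀ σ : algebraicClosure ℚ ℂ →ₐ[ℚ] ℂ, ∃ t : ℝ, (t : ℂ) = σ a := by
  simp only [totallyRealSubfield, Subfield.mem_comap, Subfield.mem_map, Subfield.mem_iInf,
    RingHom.mem_fieldRange]
  constructor
  · rintro ⟨a, h, e⟩
    exact ⟨a, e, h⟩
  · rintro ⟨a, e, h⟩
    exact ⟨a, h, e⟩

lemma exists_real_eq_of_sq_eq {z : ℂ} {t : ℝ} (ht : 0 ≤ t) (h : z ^ 2 = t) :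
    ∃ s : ℝ, (s : ℂ) = z := by
  have h1 : z ^ 2 = ((Real.sqrt t : ℝ) : ℂ) ^ 2 := by
    rw [h, ← Complex.ofReal_pow, Real.sq_sqrt ht]
  rcases sq_eq_sq_iff_eq_or_eq_neg.mp h1 with h | h
  · exact ⟨_, h.symm⟩
  · exact ⟨-Real.sqrt t, by rw [h, Complex.ofReal_neg]⟩

lemma sqrt_one_add_sq_mem {x : ℝ} (hx : x ∈ totallyRealSubfield) :
    Real.sqrt (1 + x ^ 2) ∈ totallyRealSubfield := by
  obtain ⟨a, ha, h⟩ := mem_totallyRealSubfield.mp hx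
  have hsq : ((Real.sqrt (1 + x ^ 2) : ℝ) : ℂ) ^ 2 = ((1 + a ^ 2 : algebraicClosure ℚ ℂ) : ℂ) := by
    rw [← Complex.ofReal_pow, Real.sq_sqrt (by positivity)]
    push_cast
    rw [ha]
  have halg : ((Real.sqrt (1 + x ^ 2) : ℝ) : ℂ) ∈ algebraicClosure ℚ ℂ := by
    rw [mem_algebraicClosure_iff]
    refine IsAlgebraic.of_pow (n := 2) (by norm_num) ?_
    rw [hsq, ← mem_algebraicClosure_iff]
    exact SetLike.coe_mem _
  refine mem_totallyRealSubfield.mpr ⟨⟨_, halg⟩, rfl, fun σ => ?_⟩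
  obtain ⟨t, ht⟩ := h σ
  refine exists_real_eq_of_sq_eq (t := 1 + t ^ 2) (by positivity) ?_
  have : (⟨_, halg⟩ : algebraicClosure ℚ ℂ) ^ 2 = 1 + a ^ 2 := Subtype.ext hsq
  rw [← map_pow, this, map_add, map_pow, map_one, ← ht]
  push_cast
  rfl

lemma exists_embedding_neg_sqrt_two (r : algebraicClosure ℚ ℂ) (hr : r ^ 2 = 2) :
    ∃ σ : algebraicClosure ℚ ℂ →ₐ[ℚ] ℂ, σ r = -((Real.sqrt 2 : ℝ) : ℂ) := by
  have hirr : Irreducible (X ^ 2 - C 2 : ℚ[X]) := by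
    refine X_pow_sub_C_irreducible_of_prime Nat.prime_two fun b hb => ?_
    have hb' : (b : ℝ) ^ 2 = 2 := by exact_mod_cast hb
    refine irrational_sqrt_two ⟨|b|, ?_⟩
    rw [Rat.cast_abs, ← Real.sqrt_sq_eq_abs, hb']
  have hmin : X ^ 2 - C 2 = minpoly ℚ r :=
    minpoly.eq_of_irreducible_of_monic hirr (by simp [hr]) (monic_X_pow_sub_C _ two_ne_zero)
  have : Algebra.IsAlgebraic ℚ (algebraicClosure ℚ ℂ) := algebraicClosure.isAlgebraic ℚ ℂ
  refine IntermediateField.exists_algHom_of_splits_of_aeval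
    (fun s => ⟨Algebra.IsIntegral.isIntegral s, IsAlgClosed.splits _⟩) ?_
  rw [← hmin]
  simp [← Complex.ofReal_pow]

theorem memFSqrtOneAddSq_lt_memFSqrt :
    ∃ α : ℝ, MemFSqrt (α : ℂ) ∧ ¬ MemFSqrtOneAddSq α := by
  have h2 : ((Real.sqrt 2 : ℝ) : ℂ) ^ 2 = 2 := by
    rw [← Complex.ofReal_pow, Real.sq_sqrt (by norm_num)]
    norm_num
  have h3 : ((Real.sqrt (1 + Real.sqrt 2) : ℝ) : ℂ) ^ 2 = 1 + (Real.sqrt 2 : ℝ) := by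
    rw [← Complex.ofReal_pow, Real.sq_sqrt (by positivity)]
    push_cast
    rfl
  refine ⟨Real.sqrt (1 + Real.sqrt 2), fun L hL => ?_, fun h => ?_⟩
  · refine hL _ ?_
    rw [h3]
    refine add_mem (one_mem L) (hL _ ?_)
    rw [h2]
    exact ofNat_mem L 2
  · obtain ⟨a, ha, hσ⟩ := mem_totallyRealSubfield.mp
      (h totallyRealSubfield fun x hx => sqrt_one_add_sq_mem hx)
    -- `a ^ 2 - 1` is the algebraic number `√2`.
    have hr : (a ^ 2 - 1) ^ 2 = 2 := by
      apply Subtype.ext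
      push_cast
      rw [ha, h3, add_sub_cancel_left, h2]
      rfl
    obtain ⟨σ, hs⟩ := exists_embedding_neg_sqrt_two _ hr
    obtain ⟨t, ht⟩ := hσ σ
    rw [map_sub, map_pow, map_one, ← ht] at hs
    have hs' : t ^ 2 - 1 = -Real.sqrt 2 := by exact_mod_cast hs
    have : 1 < Real.sqrt 2 := Real.lt_sqrt_of_sq_lt (by norm_num)
    nlinarith [sq_nonneg t]
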